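/- Compactness of the weighted K₁ operator: for every β, γ > 0, the integral operator on L²(0,2π) with kernel a(p)^{−1/2} · K₁(p,q) · a(q)^{−1/2} is a well-defined bounded linear operator which is compact. -/

import Mathlib

open MeasureTheory Real Set

noncomputable section

/-- The dispersion relation `ω(p) = |sin(p/2)|`. -/
def ω (p : ℝ) : ℝ := |Real.sin (p / 2)|

/-- Parameterization `h(x,z)` of the resonant manifold. -/
def resH (x z : ℝ) : ℝ :=
  (z - x) / 2 + 2 * Real.arcsin (Real.tan (|z - x| / 4) * Real.cos ((x + z) / 4))

/-- `F₊(x,z) = (cos(x/2)+cos(z/2))² + 4 sin(x/2) sin(z/2)`. -/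
def Fplus (x z : ℝ) : ℝ :=
  (Real.cos (x / 2) + Real.cos (z / 2)) ^ 2 + 4 * Real.sin (x / 2) * Real.sin (z / 2)

/-- `F₋(x,z) = (cos(x/2)+cos(z/2))² − 4 sin(x/2) sin(z/2)`. -/
def Fminus (x z : ℝ) : ℝ :=
  (Real.cos (x / 2) + Real.cos (z / 2)) ^ 2 - 4 * Real.sin (x / 2) * Real.sin (z / 2)

/-- The Rayleigh–Jeans equilibrium `𝔣(p) = 1/(βω(p)+γ)`. -/
def fRJ (β γ p : ℝ) : ℝ := 1 / (β * ω p + γ)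

/-- The collision frequency `a(p)`, with `p₁ = h(p,p₂)` and `p₃ = p + p₁ − p₂`. -/
def afreq (β γ p : ℝ) : ℝ :=
  ω p / fRJ β γ p *
    ∫ q in (0:ℝ)..(2 * π),
      ω (resH p q) * ω q * ω (p + resH p q - q) *
        (fRJ β γ (resH p q) * fRJ β γ q * fRJ β γ (p + resH p q - q)) / Real.sqrt (Fplus p q)

/-- The kernel `K₂(p,q)`, with `p₁ = h(p,q)` and `p₃ = p + p₁ − q`. -/
def K2 (β γ p q : ℝ) : ℝ :=
  ω p * ω (resH p q) * ω q * ω (p + resH p q - q) *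
    (fRJ β γ (resH p q) * fRJ β γ (p + resH p q - q)) / Real.sqrt (Fplus p q)

/-- `p₂ = (p+q)/2 + 2 arcsin(tan((p+q)/4) cos((p−q)/4))`, as used in the kernel `K₁`. -/
def p2aux (p q : ℝ) : ℝ :=
  (p + q) / 2 + 2 * Real.arcsin (Real.tan ((p + q) / 4) * Real.cos ((p - q) / 4))

/-- The kernel `K₁(p,q)`, with `p₂ = p2aux p q` and `p₃ = p + q − p₂`. -/
def K1 (β γ p q : ℝ) : ℝ :=
  if 0 < Fminus p q then
    ω p * ω q * ω (p2aux p q) * ω (p + q - p2aux p q) *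
      (fRJ β γ (p2aux p q) * fRJ β γ (p + q - p2aux p q)) / Real.sqrt (Fminus p q)
  else 0

/-- The linearized operator `L`, acting pointwise on functions. -/
def Lfun (β γ : ℝ) (g : ℝ → ℝ) (p : ℝ) : ℝ :=
  -(afreq β γ p * g p) - (∫ q in (0:ℝ)..(2 * π), K1 β γ p q * g q)
    + 2 * ∫ q in (0:ℝ)..(2 * π), K2 β γ p q * g q

/-- The measure on the fundamental domain `(0,2π)`. -/
def μ2π : Measure ℝ := volume.restrict (Set.Ioo 0 (2 * π))

/-! ### Part 1: integral operators on `L²` -/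

/-- Quantitative `L²` bound for the kernel `|k|`. -/
def KBdd (μ : Measure ℝ) (k : ℝ × ℝ → ℝ) (A : ENNReal) : Prop :=
  ∀ g : ℝ → ENNReal, Measurable g →
    ∫⁻ p, (∫⁻ q, ‖k (p, q)‖ₑ * g q ∂μ) ^ 2 ∂μ ≤ A ^ 2 * ∫⁻ q, g q ^ 2 ∂μ

/-- `T` is represented by the kernel `k`. -/
def KRep (μ : Measure ℝ) (k : ℝ × ℝ → ℝ) (T : Lp ℝ 2 μ →L[ℝ] Lp ℝ 2 μ) : Prop :=
  ∀ g : Lp ℝ 2 μ, (T g : ℝ → ℝ) =ᵐ[μ] fun p => ∫ q, k (p, q) * g q ∂μ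

/-- good kernel -/
def KGood (μ : Measure ℝ) (k : ℝ × ℝ → ℝ) : Prop :=
  Measurable k ∧ ∃ A : NNReal, KBdd μ k A

/-- kernel of a compact operator -/
def KComp (μ : Measure ℝ) (k : ℝ × ℝ → ℝ) : Prop :=
  KGood μ k ∧ ∃ T : Lp ℝ 2 μ →L[ℝ] Lp ℝ 2 μ, KRep μ k T ∧ IsCompactOperator T

lemma lint_cs {α : Type*} [MeasurableSpace α] (μ : Measure α) {f g : α → ENNReal}
    (hf : AEMeasurable f μ) (hg : AEMeasurable g μ) :
    (∫⁻ a, f a * g a ∂μ) ^ 2 ≤ (∫⁻ a, f a ^ 2 ∂μ) * ∫⁻ a, g a ^ 2 ∂μ := by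
  have h := ENNReal.lintegral_mul_le_Lp_mul_Lq μ Real.HolderConjugate.two_two hf hg
  simp only [Pi.mul_apply, ENNReal.rpow_two] at h
  calc _ ≤ _ := pow_le_pow_left₀ zero_le h 2
    _ = _ := by
      rw [mul_pow, ← ENNReal.rpow_two, ← ENNReal.rpow_two, ← ENNReal.rpow_mul, ← ENNReal.rpow_mul]
      norm_num

lemma eLpNorm_two_sq {α : Type*} [MeasurableSpace α] (μ : Measure α) (f : α → ℝ) :
    eLpNorm f 2 μ ^ 2 = ∫⁻ x, ‖f x‖ₑ ^ 2 ∂μ := by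
  have := eLpNorm_nnreal_pow_eq_lintegral (μ := μ) (f := f) (p := 2) two_ne_zero
  simpa using this

lemma KBdd.lintegral_bound {μ : Measure ℝ} {k : ℝ × ℝ → ℝ} {A : ENNReal}
    (hA : KBdd μ k A) (g : Lp ℝ 2 μ) :
    ∫⁻ p, (∫⁻ q, ‖k (p, q) * g q‖ₑ ∂μ) ^ 2 ∂μ ≤ A ^ 2 * eLpNorm g 2 μ ^ 2 := by
  rw [eLpNorm_two_sq]
  have := hA (fun q => ‖g q‖ₑ) (Lp.stronglyMeasurable g).measurable.enorm
  simpa only [enorm_mul] using this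

lemma KGood.integrable {μ : Measure ℝ} [SFinite μ] {k : ℝ × ℝ → ℝ} (hk : KGood μ k)
    (g : Lp ℝ 2 μ) : ∀ᵐ p ∂μ, Integrable (fun q => k (p, q) * g q) μ := by
  obtain ⟨hm, A, hA⟩ := hk
  have h1 := hA.lintegral_bound g
  have h2 : ∫⁻ p, (∫⁻ q, ‖k (p, q) * g q‖ₑ ∂μ) ^ 2 ∂μ ≠ ⊤ := by
    refine ne_top_of_le_ne_top ?_ h1
    exact ENNReal.mul_ne_top (by simp) (ENNReal.pow_ne_top (Lp.eLpNorm_ne_top g))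
  have hgm := (Lp.stronglyMeasurable g).measurable
  have hm2 : Measurable (fun z : ℝ × ℝ => ‖k (z.1, z.2) * g z.2‖ₑ) := by fun_prop
  have h3 := ae_lt_top (hm2.lintegral_prod_right'.pow_const 2) h2
  filter_upwards [h3] with p hp
  refine ⟨by fun_prop, ?_⟩
  rw [HasFiniteIntegral]
  by_contra hcon
  simp only [not_lt, top_le_iff] at hcon
  simp only [hcon] at hp
  simp at hp

lemma KBdd.exists_op {μ : Measure ℝ} [SFinite μ] {k : ℝ × ℝ → ℝ} (hm : Measurable k)
    {A : NNReal} (hA : KBdd μ k A) :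
    ∃ T : Lp ℝ 2 μ →L[ℝ] Lp ℝ 2 μ, KRep μ k T ∧ ‖T‖ ≤ A := by
  have hint := KGood.integrable (μ := μ) ⟨hm, A, hA⟩
  have hmeas : ∀ g : Lp ℝ 2 μ, StronglyMeasurable (fun p => ∫ q, k (p, q) * g q ∂μ) := by
    intro g
    have hgm := (Lp.stronglyMeasurable g).measurable
    apply StronglyMeasurable.integral_prod_right'
      (f := fun z : ℝ × ℝ => k (z.1, z.2) * g z.2)
    apply Measurable.stronglyMeasurable
    fun_prop
  have hb : ∀ g : Lp ℝ 2 μ, eLpNorm (fun p => ∫ q, k (p, q) * g q ∂μ) 2 μ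
      ≤ A * eLpNorm g 2 μ := by
    intro g
    have h1 : eLpNorm (fun p => ∫ q, k (p, q) * g q ∂μ) 2 μ ^ 2
        ≤ (A * eLpNorm g 2 μ) ^ 2 := by
      rw [mul_pow]
      refine le_trans ?_ (hA.lintegral_bound g)
      rw [eLpNorm_two_sq]
      refine lintegral_mono fun p => ?_
      exact pow_le_pow_left₀ zero_le (enorm_integral_le_lintegral_enorm _) 2
    exact (ENNReal.pow_le_pow_left_iff two_ne_zero).1 h1
  have hL : ∀ g : Lp ℝ 2 μ, MemLp (fun p => ∫ q, k (p, q) * g q ∂μ) 2 μ := fun g =>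
    ⟨(hmeas g).aestronglyMeasurable, lt_of_le_of_lt (hb g)
      (ENNReal.mul_lt_top (by simp) (Lp.eLpNorm_lt_top g))⟩
  let T0 : Lp ℝ 2 μ →ₗ[ℝ] Lp ℝ 2 μ :=
    { toFun := fun g => (hL g).toLp _
      map_add' := by
        intro g h
        apply Lp.ext
        filter_upwards [(hL (g + h)).coeFn_toLp, (hL g).coeFn_toLp, (hL h).coeFn_toLp,
          Lp.coeFn_add ((hL g).toLp _) ((hL h).toLp _), hint g, hint h] with p h1 h2 h3 h4 h5 h6
        rw [h1, h4, Pi.add_apply, h2, h3, ← integral_add h5 h6]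
        apply integral_congr_ae
        filter_upwards [Lp.coeFn_add g h] with q hq
        rw [hq, Pi.add_apply, mul_add]
      map_smul' := by
        intro c g
        apply Lp.ext
        filter_upwards [(hL (c • g)).coeFn_toLp, (hL g).coeFn_toLp,
          Lp.coeFn_smul c ((hL g).toLp _)] with p h1 h2 h4
        rw [h1, RingHom.id_apply, h4, Pi.smul_apply, h2, smul_eq_mul, ← integral_const_mul]
        apply integral_congr_ae
        filter_upwards [Lp.coeFn_smul c g] with q hq
        rw [hq, Pi.smul_apply, smul_eq_mul]
        ring }
  have hT0 : ∀ g, ‖T0 g‖ ≤ A * ‖g‖ := by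
    intro g
    change ‖(hL g).toLp _‖ ≤ _
    rw [Lp.norm_toLp, Lp.norm_def]
    have := ENNReal.toReal_mono
      (ENNReal.mul_ne_top (by simp) (Lp.eLpNorm_ne_top g)) (hb g)
    simpa [ENNReal.toReal_mul] using this
  refine ⟨T0.mkContinuous A hT0, fun g => (hL g).coeFn_toLp, ?_⟩
  exact LinearMap.mkContinuous_norm_le _ A.2 _

lemma KRep.unique {μ : Measure ℝ} {k : ℝ × ℝ → ℝ} {T S : Lp ℝ 2 μ →L[ℝ] Lp ℝ 2 μ}
    (hT : KRep μ k T) (hS : KRep μ k S) : T = S := by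
  ext1 g
  exact Lp.ext ((hT g).trans (hS g).symm)

lemma KRep.sub {μ : Measure ℝ} [SFinite μ] {k l : ℝ × ℝ → ℝ}
    {T S : Lp ℝ 2 μ →L[ℝ] Lp ℝ 2 μ} (hk : KGood μ k) (hl : KGood μ l)
    (hT : KRep μ k T) (hS : KRep μ l S) : KRep μ (fun z => k z - l z) (T - S) := by
  intro g
  filter_upwards [hT g, hS g, Lp.coeFn_sub (T g) (S g), hk.integrable g, hl.integrable g]
    with p h1 h2 h3 h4 h5
  rw [_root_.sub_apply, h3, Pi.sub_apply, h1, h2, ← integral_sub h4 h5]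
  simp only [sub_mul]

lemma KRep.add {μ : Measure ℝ} [SFinite μ] {k l : ℝ × ℝ → ℝ}
    {T S : Lp ℝ 2 μ →L[ℝ] Lp ℝ 2 μ} (hk : KGood μ k) (hl : KGood μ l)
    (hT : KRep μ k T) (hS : KRep μ l S) : KRep μ (fun z => k z + l z) (T + S) := by
  intro g
  filter_upwards [hT g, hS g, Lp.coeFn_add (T g) (S g), hk.integrable g, hl.integrable g]
    with p h1 h2 h3 h4 h5
  rw [_root_.add_apply, h3, Pi.add_apply, h1, h2, ← integral_add h4 h5]
  simp only [add_mul]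

lemma KRep.smul {μ : Measure ℝ} {k : ℝ × ℝ → ℝ} (c : ℝ)
    {T : Lp ℝ 2 μ →L[ℝ] Lp ℝ 2 μ}
    (hT : KRep μ k T) : KRep μ (fun z => c * k z) (c • T) := by
  intro g
  filter_upwards [hT g, Lp.coeFn_smul c (T g)] with p h1 h3
  rw [_root_.smul_apply, h3, Pi.smul_apply, h1, smul_eq_mul, ← integral_const_mul]
  simp only [mul_assoc]

lemma KComp.of_approx {μ : Measure ℝ} [SFinite μ] {k : ℝ × ℝ → ℝ} (hk : KGood μ k)
    (h : ∀ ε : NNReal, 0 < ε → ∃ l, KComp μ l ∧ KBdd μ (fun z => k z - l z) ε) :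
    KComp μ k := by
  refine ⟨hk, ?_⟩
  obtain ⟨hm, A, hA⟩ := id hk
  obtain ⟨T, hT, -⟩ := hA.exists_op hm
  refine ⟨T, hT, ?_⟩
  have hcl : IsClosed {f : Lp ℝ 2 μ →L[ℝ] Lp ℝ 2 μ | IsCompactOperator f} :=
    isClosed_setOfPred_isCompactOperator
  change T ∈ {f : Lp ℝ 2 μ →L[ℝ] Lp ℝ 2 μ | IsCompactOperator f}
  rw [← hcl.closure_eq, Metric.mem_closure_iff]
  intro ε hε
  obtain ⟨l, ⟨hl, S, hS, hSc⟩, hb⟩ := h (Real.toNNReal (ε / 2))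
    (Real.toNNReal_pos.2 (half_pos hε))
  refine ⟨S, hSc, ?_⟩
  obtain ⟨R, hR, hRn⟩ := hb.exists_op (hm.sub hl.1)
  have : T - S = R := (hT.sub hk hl hS).unique hR
  rw [dist_eq_norm, this]
  refine lt_of_le_of_lt hRn ?_
  rw [Real.coe_toNNReal _ (half_pos hε).le]
  linarith

lemma KBdd_HS {μ : Measure ℝ} [SFinite μ] {k : ℝ × ℝ → ℝ} (hm : Measurable k) :
    KBdd μ k (eLpNorm k 2 (μ.prod μ)) := by
  intro g hg
  rw [eLpNorm_two_sq, lintegral_prod _ (by fun_prop), ← lintegral_mul_const _ (by fun_prop)]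
  refine lintegral_mono fun p => ?_
  exact lint_cs μ (by fun_prop) (by fun_prop)

lemma KBdd.mono {μ : Measure ℝ} {k : ℝ × ℝ → ℝ} {A B : ENNReal} (h : KBdd μ k A) (hAB : A ≤ B) :
    KBdd μ k B := by
  intro g hg
  refine (h g hg).trans ?_
  gcongr

lemma KBdd_schur {μ : Measure ℝ} [SFinite μ] {k : ℝ × ℝ → ℝ} (hm : Measurable k) {A : ENNReal}
    (h1 : ∀ p, ∫⁻ q, ‖k (p, q)‖ₑ ∂μ ≤ A) (h2 : ∀ q, ∫⁻ p, ‖k (p, q)‖ₑ ∂μ ≤ A) :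
    KBdd μ k A := by
  intro g hg
  have hpt : ∀ p, (∫⁻ q, ‖k (p, q)‖ₑ * g q ∂μ) ^ 2 ≤ A * ∫⁻ q, ‖k (p, q)‖ₑ * g q ^ 2 ∂μ := by
    intro p
    have h := lint_cs μ (f := fun q => ‖k (p, q)‖ₑ ^ (1 / 2 : ℝ))
      (g := fun q => ‖k (p, q)‖ₑ ^ (1 / 2 : ℝ) * g q) (by fun_prop) (by fun_prop)
    have e : ∀ x : ENNReal, (x ^ (1 / 2 : ℝ)) ^ 2 = x := by
      intro x
      rw [← ENNReal.rpow_two, ← ENNReal.rpow_mul]; norm_num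
    simp only [← mul_assoc, ← sq, mul_pow, e] at h
    exact h.trans (by gcongr; exact h1 p)
  calc _ ≤ ∫⁻ p, A * ∫⁻ q, ‖k (p, q)‖ₑ * g q ^ 2 ∂μ ∂μ := lintegral_mono hpt
    _ = A * ∫⁻ p, ∫⁻ q, ‖k (p, q)‖ₑ * g q ^ 2 ∂μ ∂μ := by
      rw [lintegral_const_mul]
      exact Measurable.lintegral_prod_right' (f := fun z : ℝ × ℝ => ‖k (z.1, z.2)‖ₑ * g z.2 ^ 2)
        (by fun_prop)
    _ = A * ∫⁻ q, ∫⁻ p, ‖k (p, q)‖ₑ * g q ^ 2 ∂μ ∂μ := by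
      rw [lintegral_lintegral_swap]
      fun_prop
    _ ≤ A * ∫⁻ q, A * g q ^ 2 ∂μ := by
      gcongr with q
      rw [lintegral_mul_const _ (by fun_prop)]
      gcongr
      exact h2 q
    _ = _ := by
      rw [lintegral_const_mul _ (by fun_prop), sq, mul_assoc]

lemma KGood_of_memLp {μ : Measure ℝ} [SFinite μ] {k : ℝ × ℝ → ℝ} (hm : Measurable k)
    (hk : MemLp k 2 (μ.prod μ)) : KGood μ k := by
  refine ⟨hm, (eLpNorm k 2 (μ.prod μ)).toNNReal, ?_⟩
  rw [ENNReal.coe_toNNReal hk.eLpNorm_ne_top]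
  exact KBdd_HS hm

lemma KComp.add {μ : Measure ℝ} [IsFiniteMeasure μ] {k l : ℝ × ℝ → ℝ}
    (hk : KComp μ k) (hl : KComp μ l) (h : KGood μ (fun z => k z + l z)) :
    KComp μ (fun z => k z + l z) := by
  obtain ⟨hk, T, hT, hTc⟩ := hk
  obtain ⟨hl, S, hS, hSc⟩ := hl
  exact ⟨h, T + S, hT.add hk hl hS, hTc.add hSc⟩

lemma KComp.sub {μ : Measure ℝ} [IsFiniteMeasure μ] {k l : ℝ × ℝ → ℝ}
    (hk : KComp μ k) (hl : KComp μ l) (h : KGood μ (fun z => k z - l z)) :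
    KComp μ (fun z => k z - l z) := by
  obtain ⟨hk, T, hT, hTc⟩ := hk
  obtain ⟨hl, S, hS, hSc⟩ := hl
  exact ⟨h, T - S, hT.sub hk hl hS, hTc.sub hSc⟩

lemma memLp_ind {μ : Measure ℝ} [IsFiniteMeasure μ] {s : Set (ℝ × ℝ)} (hs : MeasurableSet s)
    (c : ℝ) : MemLp (s.indicator fun _ => c) 2 (μ.prod μ) :=
  memLp_indicator_const 2 hs c (Or.inr (measure_ne_top _ _))

lemma KGood_ind {μ : Measure ℝ} [IsFiniteMeasure μ] {s : Set (ℝ × ℝ)} (hs : MeasurableSet s)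
    (c : ℝ) : KGood μ (s.indicator fun _ => c) :=
  KGood_of_memLp (measurable_const.indicator hs) (memLp_ind hs c)

lemma KComp_rect {μ : Measure ℝ} [IsFiniteMeasure μ] {s t : Set ℝ} (hs : MeasurableSet s)
    (ht : MeasurableSet t) : KComp μ ((s ×ˢ t).indicator fun _ => (1 : ℝ)) := by
  refine ⟨KGood_ind (hs.prod ht) 1,
    (innerSL ℝ (indicatorConstLp 2 ht (measure_ne_top μ t) (1 : ℝ))).smulRight
      (indicatorConstLp 2 hs (measure_ne_top μ s) (1 : ℝ)), ?_, ?_⟩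
  · intro g
    rw [ContinuousLinearMap.smulRight_apply, innerSL_apply_apply, L2.inner_indicatorConstLp_one]
    filter_upwards [Lp.coeFn_smul (∫ x in t, g x ∂μ)
      (indicatorConstLp 2 hs (measure_ne_top μ s) (1 : ℝ)),
      indicatorConstLp_coeFn (p := 2) (hs := hs) (hμs := measure_ne_top μ s) (c := (1 : ℝ))]
      with p h1 h2
    rw [h1, Pi.smul_apply, h2]
    by_cases hp : p ∈ s
    · rw [← integral_indicator ht]
      simp only [indicator_of_mem hp, smul_eq_mul, mul_one]
      congr 1
      ext q
      by_cases hq : q ∈ t <;> simp [hp, hq]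
    · simp [hp]
  · have h1 : IsCompactOperator (innerSL ℝ (indicatorConstLp 2 ht (measure_ne_top μ t) (1 : ℝ))) :=
      isCompactOperator_of_locallyCompactSpace_dom _
    have := h1.continuous_comp (g := fun c : ℝ => c • indicatorConstLp 2 hs (measure_ne_top μ s) (1 : ℝ)) (by fun_prop)
    exact this

lemma KComp_ind {μ : Measure ℝ} [IsFiniteMeasure μ] {s : Set (ℝ × ℝ)} (hs : MeasurableSet s) :
    KComp μ (s.indicator fun _ => (1 : ℝ)) := by
  induction s, hs using MeasurableSpace.induction_on_inter (generateFrom_prod).symm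
    isPiSystem_prod with
  | empty => simpa using KComp_rect (μ := μ) MeasurableSet.empty MeasurableSet.empty
  | basic t ht =>
    obtain ⟨a, ha, b, hb, rfl⟩ := ht
    exact KComp_rect ha hb
  | compl t htm ih =>
    have hu := KComp_rect (μ := μ) MeasurableSet.univ MeasurableSet.univ
    have e : (fun z => (univ ×ˢ univ : Set (ℝ × ℝ)).indicator (fun _ => (1 : ℝ)) z
        - t.indicator (fun _ => (1 : ℝ)) z) = tᶜ.indicator fun _ => (1 : ℝ) := by
      ext z
      by_cases hz : z ∈ t <;> simp [hz]
    have := hu.sub ih (by rw [e]; exact KGood_ind htm.compl 1)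
    rwa [e] at this
  | iUnion f hd hfm ih =>
    have hacc : ∀ n, KComp μ ((accumulate f n).indicator fun _ => (1 : ℝ)) := by
      intro n
      induction n with
      | zero => simpa [accumulate_zero_nat] using ih 0
      | succ n ihn =>
        have e : (fun z => (accumulate f n).indicator (fun _ => (1 : ℝ)) z
            + (f (n+1)).indicator (fun _ => (1 : ℝ)) z)
            = (accumulate f (n+1)).indicator fun _ => (1 : ℝ) := by
          rw [accumulate_succ, indicator_union_of_disjoint]
          exact disjoint_accumulate hd (Nat.lt_succ_self n)
        have hmm : MeasurableSet (accumulate f (n+1)) :=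
          MeasurableSet.biUnion (to_countable _) fun i _ => hfm i
        have := ihn.add (ih (n+1)) (by rw [e]; exact KGood_ind hmm 1)
        rwa [e] at this
    have hU : MeasurableSet (⋃ i, f i) := MeasurableSet.iUnion hfm
    refine KComp.of_approx (KGood_ind hU 1) fun ε hε => ?_
    have htd : Filter.Tendsto (fun n => (μ.prod μ) ((⋃ i, f i) \ accumulate f n)) Filter.atTop
        (nhds 0) := by
      have h0 : (⋂ n, ((⋃ i, f i) \ accumulate f n)) = ∅ := by
        rw [← sdiff_iUnion, iUnion_accumulate, sdiff_self]
      rw [← measure_empty (μ := μ.prod μ), ← h0]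
      apply tendsto_measure_iInter_atTop
      · intro n
        exact (hU.diff (MeasurableSet.biUnion (to_countable _) fun i _ => hfm i)).nullMeasurableSet
      · intro m n hmn
        exact sdiff_subset_sdiff_right (monotone_accumulate hmn)
      · exact ⟨0, measure_ne_top _ _⟩
    have hε2 : (0 : ENNReal) < (ε : ENNReal) ^ 2 := by positivity
    obtain ⟨n, hn⟩ := (htd.eventually_lt_const hε2).exists
    refine ⟨_, hacc n, ?_⟩
    have hD : MeasurableSet ((⋃ i, f i) \ accumulate f n) :=
      hU.diff (MeasurableSet.biUnion (to_countable _) fun i _ => hfm i)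
    have e : (fun z => (⋃ i, f i).indicator (fun _ => (1 : ℝ)) z
        - (accumulate f n).indicator (fun _ => (1 : ℝ)) z)
        = ((⋃ i, f i) \ accumulate f n).indicator fun _ => (1 : ℝ) := by
      ext z
      by_cases hz : z ∈ accumulate f n
      · have hz2 := accumulate_subset_iUnion n hz
        rw [indicator_of_mem hz, indicator_of_mem hz2, indicator_of_notMem (fun h => h.2 hz)]
        simp
      · by_cases hz2 : z ∈ ⋃ i, f i
        · rw [indicator_of_notMem hz, indicator_of_mem hz2, indicator_of_mem (show z ∈ (⋃ i, f i) \ accumulate f n from ⟨hz2, hz⟩)]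
          simp
        · rw [indicator_of_notMem hz, indicator_of_notMem hz2,
            indicator_of_notMem (fun h => hz2 h.1)]
          simp
    rw [e]
    refine (KBdd_HS (measurable_const.indicator hD)).mono ?_
    rw [← ENNReal.pow_le_pow_left_iff two_ne_zero, eLpNorm_two_sq]
    refine le_trans (le_of_eq ?_) hn.le
    rw [← lintegral_indicator_one hD]
    congr 1
    ext z
    by_cases hz : z ∈ (⋃ i, f i) \ accumulate f n
    · simp only [indicator_of_mem hz]; simp
    · simp only [indicator_of_notMem hz]; simp

lemma KComp_simple {μ : Measure ℝ} [IsFiniteMeasure μ] (f : SimpleFunc (ℝ × ℝ) ℝ) :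
    KComp μ f := by
  induction f using SimpleFunc.induction with
  | const c hs =>
    rename_i s
    obtain ⟨-, T, hT, hTc⟩ := KComp_ind (μ := μ) hs
    have e : (fun z => c * s.indicator (fun _ => (1 : ℝ)) z) =
      ⇑(SimpleFunc.piecewise s hs (SimpleFunc.const _ c) (SimpleFunc.const _ 0)) := by
      ext z
      by_cases hz : z ∈ s <;> simp [hz]
    have e2 : (s.indicator (fun _ => c)) =
      ⇑(SimpleFunc.piecewise s hs (SimpleFunc.const _ c) (SimpleFunc.const _ 0)) := by
      ext z
      by_cases hz : z ∈ s <;> simp [hz]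
    refine ⟨e2 ▸ KGood_ind hs c, c • T, e ▸ hT.smul c, hTc.smul c⟩
  | add h hf hg =>
    rename_i f g
    refine hf.add hg (KGood_of_memLp (f + g).measurable ?_)
    exact SimpleFunc.memLp_of_isFiniteMeasure (f + g) 2 _

lemma KComp_of_memLp {μ : Measure ℝ} [IsFiniteMeasure μ] {k : ℝ × ℝ → ℝ} (hm : Measurable k)
    (hk : MemLp k 2 (μ.prod μ)) : KComp μ k := by
  refine KComp.of_approx (KGood_of_memLp hm hk) fun ε hε => ?_
  obtain ⟨g, hg, -⟩ := hk.exists_simpleFunc_eLpNorm_sub_lt (by simp)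
    (ε := (ε : ENNReal)) (by positivity)
  exact ⟨g, KComp_simple g, (KBdd_HS (hm.sub g.measurable)).mono hg.le⟩

lemma ennreal_add_sq (x y : ENNReal) : (x + y) ^ 2 ≤ 4 * (x ^ 2 + y ^ 2) := by
  rcases le_total x y with h | h
  · calc (x + y) ^ 2 ≤ (y + y) ^ 2 := by gcongr
      _ = 4 * y ^ 2 := by ring
      _ ≤ _ := by gcongr; exact le_add_self
  · calc (x + y) ^ 2 ≤ (x + x) ^ 2 := by gcongr
      _ = 4 * x ^ 2 := by ring
      _ ≤ _ := by gcongr; exact le_self_add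

/-- Abstract compactness criterion. -/
lemma KComp_of_schur {μ : Measure ℝ} [IsFiniteMeasure μ] {k : ℝ × ℝ → ℝ} (hm : Measurable k)
    (h : ∀ ε : NNReal, 0 < ε → ∃ s : Set (ℝ × ℝ), MeasurableSet s ∧
      (∃ M : ℝ, ∀ z ∈ s, |k z| ≤ M) ∧
      (∀ p, ∫⁻ q, ‖sᶜ.indicator k (p, q)‖ₑ ∂μ ≤ ε) ∧
      (∀ q, ∫⁻ p, ‖sᶜ.indicator k (p, q)‖ₑ ∂μ ≤ ε)) : KComp μ k := by
  have key : ∀ ε : NNReal, 0 < ε → ∃ l, KComp μ l ∧ KBdd μ (fun z => k z - l z) ε := by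
    intro ε hε
    obtain ⟨s, hs, ⟨M, hM⟩, h1, h2⟩ := h ε hε
    refine ⟨s.indicator k, KComp_of_memLp (hm.indicator hs) ?_, ?_⟩
    · refine MemLp.of_bound (hm.indicator hs).aestronglyMeasurable |M| ?_
      refine Filter.Eventually.of_forall fun z => ?_
      by_cases hz : z ∈ s
      · simpa [hz] using (hM z hz).trans (le_abs_self M)
      · simp [hz]
    · have e : (fun z => k z - s.indicator k z) = sᶜ.indicator k := by
        rw [indicator_compl]; rfl
      rw [e]
      exact KBdd_schur (hm.indicator hs.compl) h1 h2
  refine KComp.of_approx ?_ key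
  obtain ⟨l, ⟨⟨hlm, A, hA⟩, -⟩, hb⟩ := key 1 one_pos
  refine ⟨hm, 2 * (A + 1), ?_⟩
  intro g hg
  have hpt : ∀ p, (∫⁻ q, ‖k (p, q)‖ₑ * g q ∂μ) ^ 2 ≤
      4 * ((∫⁻ q, ‖l (p, q)‖ₑ * g q ∂μ) ^ 2 + (∫⁻ q, ‖k (p, q) - l (p, q)‖ₑ * g q ∂μ) ^ 2) := by
    intro p
    have h1 : ∫⁻ q, ‖k (p, q)‖ₑ * g q ∂μ ≤
        ∫⁻ q, ‖l (p, q)‖ₑ * g q ∂μ + ∫⁻ q, ‖k (p, q) - l (p, q)‖ₑ * g q ∂μ := by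
      rw [← lintegral_add_left (by fun_prop)]
      refine lintegral_mono fun q => ?_
      rw [← add_mul]
      gcongr
      calc ‖k (p, q)‖ₑ = ‖l (p, q) + (k (p, q) - l (p, q))‖ₑ := by congr 1; ring
        _ ≤ _ := enorm_add_le _ _
    exact (pow_le_pow_left₀ zero_le h1 2).trans (ennreal_add_sq _ _)
  calc _ ≤ ∫⁻ p, 4 * ((∫⁻ q, ‖l (p, q)‖ₑ * g q ∂μ) ^ 2
        + (∫⁻ q, ‖k (p, q) - l (p, q)‖ₑ * g q ∂μ) ^ 2) ∂μ := lintegral_mono hpt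
    _ = 4 * (∫⁻ p, (∫⁻ q, ‖l (p, q)‖ₑ * g q ∂μ) ^ 2 ∂μ
        + ∫⁻ p, (∫⁻ q, ‖k (p, q) - l (p, q)‖ₑ * g q ∂μ) ^ 2 ∂μ) := by
      have m1 : Measurable fun p => (∫⁻ q, ‖l (p, q)‖ₑ * g q ∂μ) :=
        Measurable.lintegral_prod_right' (f := fun z : ℝ × ℝ => ‖l (z.1, z.2)‖ₑ * g z.2)
          (by fun_prop)
      have m2 : Measurable fun p => (∫⁻ q, ‖k (p, q) - l (p, q)‖ₑ * g q ∂μ) :=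
        Measurable.lintegral_prod_right'
          (f := fun z : ℝ × ℝ => ‖k (z.1, z.2) - l (z.1, z.2)‖ₑ * g z.2) (by fun_prop)
      rw [lintegral_const_mul _ (by fun_prop), lintegral_add_left (by fun_prop)]
    _ ≤ 4 * ((A : ENNReal) ^ 2 * ∫⁻ q, g q ^ 2 ∂μ + ((1 : NNReal) : ENNReal) ^ 2 * ∫⁻ q, g q ^ 2 ∂μ) := by
      gcongr
      · exact hA g hg
      · exact hb g hg
    _ = (4 * ((A : ENNReal) ^ 2 + 1)) * ∫⁻ q, g q ^ 2 ∂μ := by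
      simp; ring
    _ ≤ _ := by
      gcongr
      have : (4 * (A ^ 2 + 1) : NNReal) ≤ (2 * (A + 1)) ^ 2 := by
        rw [← NNReal.coe_le_coe]; push_cast
        nlinarith [A.2, A.coe_nonneg]
      exact_mod_cast this

/-! ### Part 2: trigonometric identities -/

/-- `T = tan((p+q)/4) cos((p-q)/4)` -/
def TT (p q : ℝ) : ℝ := Real.tan ((p + q) / 4) * Real.cos ((p - q) / 4)

lemma TT_symm (p q : ℝ) : TT p q = TT q p := by
  unfold TT
  rw [add_comm p q, ← Real.cos_neg ((p - q) / 4)]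
  congr 2; ring

lemma cosd_symm (p q : ℝ) : Real.cos ((p - q) / 4) = Real.cos ((q - p) / 4) := by
  rw [← Real.cos_neg ((p - q) / 4)]
  congr 1; ring

lemma sin_mul_sin_half (p q : ℝ) : Real.sin (p / 2) * Real.sin (q / 2)
    = Real.cos ((p - q) / 4) ^ 2 - Real.cos ((p + q) / 4) ^ 2 := by
  have h1 : p / 2 = (p + q) / 4 + (p - q) / 4 := by ring
  have h2 : q / 2 = (p + q) / 4 - (p - q) / 4 := by ring
  rw [h1, h2, Real.sin_add, Real.sin_sub]
  have a1 := Real.sin_sq_add_cos_sq ((p + q) / 4)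
  have a2 := Real.sin_sq_add_cos_sq ((p - q) / 4)
  linear_combination (Real.cos ((p - q) / 4)) ^ 2 * a1 - Real.cos ((p + q) / 4) ^ 2 * a2

lemma Fminus_eq (p q : ℝ) : Fminus p q
    = 4 * (Real.cos ((p + q) / 4) ^ 2 - Real.sin ((p + q) / 4) ^ 2 * Real.cos ((p - q) / 4) ^ 2) := by
  have h := sin_mul_sin_half p q
  have h1 : p / 2 = (p + q) / 4 + (p - q) / 4 := by ring
  have h2 : q / 2 = (p + q) / 4 - (p - q) / 4 := by ring
  have h3 : Real.cos (p / 2) + Real.cos (q / 2)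
      = 2 * Real.cos ((p + q) / 4) * Real.cos ((p - q) / 4) := by
    rw [h1, h2, Real.cos_add, Real.cos_sub]; ring
  unfold Fminus
  rw [h3, mul_assoc 4, h]
  have a1 := Real.sin_sq_add_cos_sq ((p + q) / 4)
  linear_combination (4 * Real.cos ((p - q) / 4) ^ 2) * a1

lemma sin_half_pos {p : ℝ} (hp : p ∈ Ioo 0 (2 * π)) : 0 < Real.sin (p / 2) :=
  Real.sin_pos_of_pos_of_lt_pi (by linarith [hp.1]) (by linarith [hp.2])

lemma ω_pos {p : ℝ} (hp : p ∈ Ioo 0 (2 * π)) : 0 < ω p := abs_pos.2 (sin_half_pos hp).ne'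

lemma ω_nonneg (p : ℝ) : 0 ≤ ω p := abs_nonneg _

lemma ω_le_one (p : ℝ) : ω p ≤ 1 := Real.abs_sin_le_one _

lemma cosd_pos {p q : ℝ} (hp : p ∈ Ioo 0 (2 * π)) (hq : q ∈ Ioo 0 (2 * π)) :
    0 < Real.cos ((p - q) / 4) := by
  apply Real.cos_pos_of_mem_Ioo
  constructor <;> linarith [hp.1, hp.2, hq.1, hq.2]

lemma sins_pos {p q : ℝ} (hp : p ∈ Ioo 0 (2 * π)) (hq : q ∈ Ioo 0 (2 * π)) :
    0 < Real.sin ((p + q) / 4) := by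
  apply Real.sin_pos_of_pos_of_lt_pi <;> linarith [hp.1, hp.2, hq.1, hq.2]

lemma cos_sq_lt {p q : ℝ} (hp : p ∈ Ioo 0 (2 * π)) (hq : q ∈ Ioo 0 (2 * π)) :
    Real.cos ((p + q) / 4) ^ 2 < Real.cos ((p - q) / 4) ^ 2 := by
  have := sin_mul_sin_half p q
  have h := mul_pos (sin_half_pos hp) (sin_half_pos hq)
  linarith

lemma cos_ne_of_Fminus {p q : ℝ} (h : 0 < Fminus p q) : Real.cos ((p + q) / 4) ≠ 0 := by
  intro h0
  rw [Fminus_eq, h0] at h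
  have : 0 ≤ Real.sin ((p + q) / 4) ^ 2 * Real.cos ((p - q) / 4) ^ 2 := by positivity
  nlinarith

lemma Fminus_eq_TT {p q : ℝ} (h : Real.cos ((p + q) / 4) ≠ 0) :
    Fminus p q = 4 * Real.cos ((p + q) / 4) ^ 2 * (1 - TT p q ^ 2) := by
  rw [Fminus_eq, TT, Real.tan_eq_sin_div_cos]
  field_simp

lemma TT_sq_lt {p q : ℝ} (h : 0 < Fminus p q) : TT p q ^ 2 < 1 := by
  have hc := cos_ne_of_Fminus h
  rw [Fminus_eq_TT hc] at h
  have : 0 < 4 * Real.cos ((p + q) / 4) ^ 2 := by positivity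
  have := (mul_pos_iff_of_pos_left this).1 h
  linarith

lemma omega23 {p q : ℝ} (h : TT p q ^ 2 < 1) :
    ω (p2aux p q) * ω (p + q - p2aux p q) = |Real.sin ((p + q) / 4) ^ 2 - TT p q ^ 2| := by
  obtain ⟨h1, h2⟩ := abs_lt.1 ((sq_lt_one_iff_abs_lt_one _).1 h)
  have e1 : p2aux p q / 2 = (p + q) / 4 + Real.arcsin (TT p q) := by
    unfold p2aux TT; ring
  have e2 : (p + q - p2aux p q) / 2 = (p + q) / 4 - Real.arcsin (TT p q) := by
    unfold p2aux TT; ring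
  unfold ω
  rw [← abs_mul, e1, e2, Real.sin_add, Real.sin_sub, Real.sin_arcsin h1.le h2.le]
  congr 1
  have a1 := Real.sin_sq_add_cos_sq ((p + q) / 4)
  have a2 := Real.sin_sq_add_cos_sq (Real.arcsin (TT p q))
  rw [Real.sin_arcsin h1.le h2.le] at a2
  linear_combination Real.sin ((p + q) / 4) ^ 2 * a2 - TT p q ^ 2 * a1

lemma omega23_bound {p q : ℝ} (hp : p ∈ Ioo 0 (2 * π)) (hq : q ∈ Ioo 0 (2 * π))
    (h : 0 < Fminus p q) :
    ω (p2aux p q) * ω (p + q - p2aux p q) / Real.sqrt (Fminus p q)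
      ≤ Real.cos ((p - q) / 4) / Real.sqrt (1 - TT p q ^ 2) := by
  have hT := TT_sq_lt h
  have hc := cos_ne_of_Fminus h
  have hD := cosd_pos hp hq
  have hS := sins_pos hp hq
  have hlt := cos_sq_lt hp hq
  have hF := Fminus_eq p q
  rw [omega23 hT, Fminus_eq_TT hc, Real.sqrt_mul (by positivity)]
  have e4 : Real.sqrt (4 * Real.cos ((p + q) / 4) ^ 2) = 2 * |Real.cos ((p + q) / 4)| := by
    rw [Real.sqrt_mul (by norm_num), Real.sqrt_sq_eq_abs]
    congr 1
    rw [show (4 : ℝ) = 2 ^ 2 by norm_num]; exact Real.sqrt_sq (by norm_num)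
  rw [e4, ← div_div]
  apply div_le_div_of_nonneg_right _ (Real.sqrt_nonneg _)
  have hca : 0 < |Real.cos ((p + q) / 4)| := abs_pos.2 hc
  rw [div_le_iff₀ (by positivity)]
  have a1 := Real.sin_sq_add_cos_sq ((p + q) / 4)
  have hS1 := Real.sin_le_one ((p + q) / 4)
  have hsq := sq_abs (Real.cos ((p + q) / 4))
  have eT : TT p q ^ 2 * Real.cos ((p + q) / 4) ^ 2
      = Real.sin ((p + q) / 4) ^ 2 * Real.cos ((p - q) / 4) ^ 2 := by
    rw [TT, Real.tan_eq_sin_div_cos]; field_simp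
  rw [hF] at h
  set c := Real.cos ((p + q) / 4)
  set S := Real.sin ((p + q) / 4)
  set D := Real.cos ((p - q) / 4)
  set T := TT p q
  have hc2 : 0 < c ^ 2 := by positivity
  -- `|S² - T²| ≤ S² D²`
  have k1 : |S ^ 2 - T ^ 2| ≤ S ^ 2 * D ^ 2 := by
    have e : (S ^ 2 - T ^ 2) * c ^ 2 = S ^ 2 * (c ^ 2 - D ^ 2) := by linear_combination - eT
    have : |S ^ 2 - T ^ 2| * c ^ 2 ≤ S ^ 2 * D ^ 2 * c ^ 2 := by
      rw [← abs_of_pos hc2, ← abs_mul, abs_of_pos hc2, e, abs_mul, abs_of_nonneg (sq_nonneg S),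
        abs_of_neg (by linarith), mul_assoc]
      apply mul_le_mul_of_nonneg_left _ (sq_nonneg S)
      nlinarith
    exact le_of_mul_le_mul_right this hc2
  have k2 : S * D ≤ |c| := by
    apply le_of_sq_le_sq _ hca.le
    rw [hsq]; nlinarith
  calc |S ^ 2 - T ^ 2| ≤ S * D * (S * D) := by linarith [k1]
    _ ≤ 1 * D * |c| := by gcongr
    _ ≤ D * (2 * |c|) := by nlinarith [mul_pos hD hca]

lemma hasDerivAt_TT {p q : ℝ} (hc : Real.cos ((p + q) / 4) ≠ 0) :
    HasDerivAt (fun q => TT p q)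
      ((1 / Real.cos ((p + q) / 4) ^ 2) * (1 / 4) * Real.cos ((p - q) / 4)
        + Real.tan ((p + q) / 4) * (Real.sin ((p - q) / 4) * (1 / 4))) q := by
  have h1 : HasDerivAt (fun q : ℝ => (p + q) / 4) (1 / 4) q :=
    ((hasDerivAt_id q).const_add p).div_const 4
  have h2 : HasDerivAt (fun q : ℝ => (p - q) / 4) (-1 / 4) q :=
    ((hasDerivAt_id q).const_sub p).div_const 4
  have h3 := (Real.hasDerivAt_tan hc).comp q h1
  have h4 := (Real.hasDerivAt_cos ((p - q) / 4)).comp q h2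
  have h : HasDerivAt (fun q => TT p q) _ q := h3.mul h4
  refine h.congr_deriv ?_
  simp only [Function.comp]
  ring

lemma derivTT_bound {p q : ℝ} (hp : p ∈ Ioo 0 (2 * π)) (hq : q ∈ Ioo 0 (2 * π))
    (hc : Real.cos ((p + q) / 4) ≠ 0) :
    Real.cos ((p - q) / 4) / 4 ≤
      ((1 / Real.cos ((p + q) / 4) ^ 2) * (1 / 4) * Real.cos ((p - q) / 4)
        + Real.tan ((p + q) / 4) * (Real.sin ((p - q) / 4) * (1 / 4))) := by
  have hD := cosd_pos hp hq
  have hS := sins_pos hp hq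
  have hlt := cos_sq_lt hp hq
  have a1 := Real.sin_sq_add_cos_sq ((p + q) / 4)
  have a2 := Real.sin_sq_add_cos_sq ((p - q) / 4)
  rw [Real.tan_eq_sin_div_cos]
  set c := Real.cos ((p + q) / 4)
  set S := Real.sin ((p + q) / 4)
  set D := Real.cos ((p - q) / 4)
  set E := Real.sin ((p - q) / 4)
  have hc2 : 0 < c ^ 2 := by positivity
  have e : 1 / c ^ 2 * (1 / 4) * D + S / c * (E * (1 / 4)) = (D + S * c * E) / c ^ 2 / 4 := by
    field_simp
  rw [e]
  apply div_le_div_of_nonneg_right _ (by norm_num)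
  rw [le_div_iff₀ hc2]
  have h1 : |c| ≤ D := abs_le_of_sq_le_sq hlt.le hD.le
  have h2 : |E| ≤ S := abs_le_of_sq_le_sq (by linarith) hS.le
  have h3 : |c * E| ≤ D * S := by
    rw [abs_mul]; gcongr
  have h4 := (abs_le.1 h3).1
  nlinarith

/-- The singular set. -/
def Eset (δ p : ℝ) : Set ℝ :=
  {q | q ∈ Ioo 0 (2 * π) ∧ Real.cos ((p + q) / 4) ≠ 0 ∧ |TT p q| < 1 ∧
    π / 2 - δ < |Real.arcsin (TT p q)|}

lemma measurable_tan' : Measurable Real.tan := by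
  have : Real.tan = fun x => Real.sin x / Real.cos x := by
    ext x; exact Real.tan_eq_sin_div_cos x
  rw [this]
  fun_prop

lemma measurable_TT : Measurable (fun z : ℝ × ℝ => TT z.1 z.2) := by
  have := measurable_tan'
  unfold TT
  fun_prop

lemma measurable_arcsin' : Measurable Real.arcsin := Real.continuous_arcsin.measurable

lemma measurableSet_Eset (δ p : ℝ) : MeasurableSet (Eset δ p) := by
  have h1 : Measurable (fun q => TT p q) := by
    have := measurable_tan'
    unfold TT
    fun_prop
  have h2 := measurable_arcsin'.comp h1
  have e : Eset δ p = Ioo 0 (2 * π) ∩ ({q | Real.cos ((p + q) / 4) = 0}ᶜ ∩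
      ({q | |TT p q| < 1} ∩ {q | π / 2 - δ < |Real.arcsin (TT p q)|})) := by
    ext q
    simp only [Eset, mem_inter_iff, mem_setOf_eq, mem_compl_iff, ne_eq]
  rw [e]
  refine measurableSet_Ioo.inter (MeasurableSet.inter ?_ (MeasurableSet.inter ?_ ?_))
  · exact (measurableSet_eq_fun (by fun_prop) measurable_const).compl
  · exact measurableSet_lt h1.abs measurable_const
  · exact measurableSet_lt measurable_const h2.abs

lemma row_piece {δ p : ℝ} (hδ : 0 < δ) (hp : p ∈ Ioo 0 (2 * π)) {a b : ℝ}
    (hI : Ioo a b ⊆ Ioo 0 (2 * π)) (hc : ∀ q ∈ Ioo a b, Real.cos ((p + q) / 4) ≠ 0) :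
    ∫⁻ q in Eset δ p ∩ Ioo a b,
      ENNReal.ofReal (Real.cos ((p - q) / 4) / Real.sqrt (1 - TT p q ^ 2))
      ≤ ENNReal.ofReal (8 * δ) := by
  have hms : MeasurableSet (Eset δ p ∩ Ioo a b) := (measurableSet_Eset δ p).inter measurableSet_Ioo
  set T' : ℝ → ℝ := fun q => ((1 / Real.cos ((p + q) / 4) ^ 2) * (1 / 4) * Real.cos ((p - q) / 4)
        + Real.tan ((p + q) / 4) * (Real.sin ((p - q) / 4) * (1 / 4))) with hT'
  have hmono : StrictMonoOn (fun q => TT p q) (Ioo a b) := by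
    apply strictMonoOn_of_deriv_pos (convex_Ioo a b)
    · intro q hq
      exact (hasDerivAt_TT (hc q hq)).continuousAt.continuousWithinAt
    · intro q hq
      rw [interior_Ioo] at hq
      rw [(hasDerivAt_TT (hc q hq)).deriv]
      have := cosd_pos hp (hI hq)
      exact lt_of_lt_of_le (by positivity) (derivTT_bound hp (hI hq) (hc q hq))
  have hinj : InjOn (fun q => Real.arcsin (TT p q)) (Eset δ p ∩ Ioo a b) := by
    intro x hx y hy hxy
    obtain ⟨x1, x2⟩ := abs_lt.1 hx.1.2.2.1
    obtain ⟨y1, y2⟩ := abs_lt.1 hy.1.2.2.1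
    exact hmono.injOn hx.2 hy.2
      (Real.injOn_arcsin ⟨x1.le, x2.le⟩ ⟨y1.le, y2.le⟩ hxy)
  have hder : ∀ q ∈ Eset δ p ∩ Ioo a b, HasDerivWithinAt (fun q => Real.arcsin (TT p q))
      (1 / Real.sqrt (1 - TT p q ^ 2) * T' q) (Eset δ p ∩ Ioo a b) q := by
    intro q hq
    obtain ⟨x1, x2⟩ := abs_lt.1 hq.1.2.2.1
    exact ((Real.hasDerivAt_arcsin x1.ne' x2.ne).comp q
      (hasDerivAt_TT hq.1.2.1)).hasDerivWithinAt
  have hcv := lintegral_image_eq_lintegral_abs_deriv_mul hms hder hinj (fun _ => 4)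
  have himg : (fun q => Real.arcsin (TT p q)) '' (Eset δ p ∩ Ioo a b) ⊆
      Icc (-(π / 2)) (-(π / 2) + δ) ∪ Icc (π / 2 - δ) (π / 2) := by
    rintro _ ⟨q, hq, rfl⟩
    have h1 := hq.1.2.2.2
    have h2 := Real.arcsin_mem_Icc (TT p q)
    rcases lt_abs.1 h1 with h | h
    · exact Or.inr ⟨h.le, h2.2⟩
    · exact Or.inl ⟨h2.1, by dsimp only; linarith⟩
  calc _ ≤ ∫⁻ q in Eset δ p ∩ Ioo a b,
        ENNReal.ofReal |1 / Real.sqrt (1 - TT p q ^ 2) * T' q| * 4 := by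
        refine setLIntegral_mono' hms fun q hq => ?_
        rw [show (4 : ENNReal) = ENNReal.ofReal 4 by simp, ← ENNReal.ofReal_mul (abs_nonneg _)]
        apply ENNReal.ofReal_le_ofReal
        have hb := derivTT_bound hp hq.1.1 hq.1.2.1
        have : 0 ≤ 1 / Real.sqrt (1 - TT p q ^ 2) := by positivity
        calc _ = 1 / Real.sqrt (1 - TT p q ^ 2) * (Real.cos ((p - q) / 4) / 4) * 4 := by ring
          _ ≤ 1 / Real.sqrt (1 - TT p q ^ 2) * T' q * 4 := by gcongr
          _ ≤ _ := by gcongr; exact le_abs_self _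
    _ = ∫⁻ _ in (fun q => Real.arcsin (TT p q)) '' (Eset δ p ∩ Ioo a b), 4 := hcv.symm
    _ ≤ ∫⁻ _ in Icc (-(π / 2)) (-(π / 2) + δ) ∪ Icc (π / 2 - δ) (π / 2), (4 : ENNReal) :=
        lintegral_mono_set himg
    _ = 4 * volume (Icc (-(π / 2)) (-(π / 2) + δ) ∪ Icc (π / 2 - δ) (π / 2)) := by
        rw [setLIntegral_const]
    _ ≤ 4 * (volume (Icc (-(π / 2)) (-(π / 2) + δ)) + volume (Icc (π / 2 - δ) (π / 2))) := by
        gcongr; exact measure_union_le _ _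
    _ = ENNReal.ofReal (8 * δ) := by
        rw [Real.volume_Icc, Real.volume_Icc, show (4 : ENNReal) = ENNReal.ofReal 4 by simp,
          ← ENNReal.ofReal_add (by linarith) (by linarith), ← ENNReal.ofReal_mul (by norm_num)]
        congr 1; ring

lemma row_bound {δ p : ℝ} (hδ : 0 < δ) (hp : p ∈ Ioo 0 (2 * π)) :
    ∫⁻ q in Eset δ p,
      ENNReal.ofReal (Real.cos ((p - q) / 4) / Real.sqrt (1 - TT p q ^ 2))
      ≤ ENNReal.ofReal (16 * δ) := by
  have hsub : Eset δ p ⊆ (Eset δ p ∩ Ioo 0 (2 * π - p)) ∪ (Eset δ p ∩ Ioo (2 * π - p) (2 * π)) := by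
    intro q hq
    rcases lt_trichotomy q (2 * π - p) with h | h | h
    · exact Or.inl ⟨hq, hq.1.1, h⟩
    · exfalso
      apply hq.2.1
      rw [h, show (p + (2 * π - p)) / 4 = π / 2 by ring, Real.cos_pi_div_two]
    · exact Or.inr ⟨hq, h, hq.1.2⟩
  calc _ ≤ _ := lintegral_mono_set hsub
    _ ≤ _ := lintegral_union_le _ _ _
    _ ≤ ENNReal.ofReal (8 * δ) + ENNReal.ofReal (8 * δ) := by
      gcongr
      · apply row_piece hδ hp
        · intro q hq; exact ⟨hq.1, by linarith [hq.2, hp.1]⟩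
        · intro q hq
          apply (Real.cos_pos_of_mem_Ioo ⟨_, _⟩).ne' <;> linarith [hq.1, hq.2, hp.1, Real.pi_pos]
      · apply row_piece hδ hp
        · intro q hq; exact ⟨by linarith [hq.1, hp.2], hq.2⟩
        · intro q hq
          apply (Real.cos_neg_of_pi_div_two_lt_of_lt _ _).ne <;>
            linarith [hq.1, hq.2, hp.1, hp.2, Real.pi_pos]
    _ = _ := by
      rw [← ENNReal.ofReal_add (by linarith) (by linarith)]
      congr 1; ring

/-! ### Part 3: lower bound for the collision frequency -/

lemma fRJ_le {β γ : ℝ} (hβ : 0 < β) (hγ : 0 < γ) (p : ℝ) : fRJ β γ p ≤ 1 / γ := by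
  unfold fRJ
  have := ω_nonneg p
  apply one_div_le_one_div_of_le hγ
  nlinarith

lemma le_fRJ {β γ : ℝ} (hβ : 0 < β) (hγ : 0 < γ) (p : ℝ) : 1 / (β + γ) ≤ fRJ β γ p := by
  unfold fRJ
  have := ω_nonneg p
  have := ω_le_one p
  apply one_div_le_one_div_of_le (by positivity)
  nlinarith

lemma fRJ_pos {β γ : ℝ} (hβ : 0 < β) (hγ : 0 < γ) (p : ℝ) : 0 < fRJ β γ p := by
  unfold fRJ
  have := ω_nonneg p
  positivity

lemma omega13 {p q : ℝ} (hp : p ∈ Ioo 0 (2 * π)) (hq : q ∈ Ioo 0 (2 * π)) :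
    Real.sin ((p - q) / 4) ^ 2 * (ω p * ω q) ≤ ω (resH p q) * ω (p + resH p q - q) := by
  have hD := cosd_pos hp hq
  have hlt := cos_sq_lt hp hq
  have hss := sin_mul_sin_half p q
  have a1 := Real.sin_sq_add_cos_sq ((p + q) / 4)
  have a2 := Real.sin_sq_add_cos_sq ((p - q) / 4)
  set U := Real.tan (|q - p| / 4) * Real.cos ((p + q) / 4) with hU
  have hcabs : Real.cos (|q - p| / 4) = Real.cos ((p - q) / 4) := by
    rw [cosd_symm, show |q - p| / 4 = |(q - p) / 4| by rw [abs_div]; norm_num, Real.cos_abs]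
  have hU2 : U ^ 2 * Real.cos ((p - q) / 4) ^ 2
      = Real.sin ((p - q) / 4) ^ 2 * Real.cos ((p + q) / 4) ^ 2 := by
    have hs2 : Real.sin (|q - p| / 4) ^ 2 = Real.sin ((p - q) / 4) ^ 2 := by
      have := Real.sin_sq_add_cos_sq (|q - p| / 4)
      rw [hcabs] at this
      linarith
    rw [hU, Real.tan_eq_sin_div_cos, hcabs, ← hs2]
    field_simp
  have e1 : resH p q / 2 = Real.arcsin U - (p - q) / 4 := by unfold resH; rw [hU]; ring
  have e2 : (p + resH p q - q) / 2 = Real.arcsin U + (p - q) / 4 := by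
    unfold resH; rw [hU]; ring
  have eω : ω p * ω q = Real.cos ((p - q) / 4) ^ 2 - Real.cos ((p + q) / 4) ^ 2 := by
    unfold ω
    rw [abs_of_pos (sin_half_pos hp), abs_of_pos (sin_half_pos hq), hss]
  have hU1 : U ^ 2 ≤ 1 := by
    have : U ^ 2 * Real.cos ((p - q) / 4) ^ 2 ≤ 1 * Real.cos ((p - q) / 4) ^ 2 := by
      rw [hU2]
      have : Real.sin ((p - q) / 4) ^ 2 ≤ 1 := Real.sin_sq_le_one _
      nlinarith [sq_nonneg (Real.cos ((p + q) / 4))]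
    exact le_of_mul_le_mul_right this (by positivity)
  obtain ⟨u1, u2⟩ := abs_le.1 ((sq_le_one_iff_abs_le_one _).1 hU1)
  rw [eω]
  unfold ω
  rw [← abs_mul, e1, e2, Real.sin_add, Real.sin_sub, Real.sin_arcsin u1 u2]
  have a3 := Real.sin_sq_add_cos_sq (Real.arcsin U)
  rw [Real.sin_arcsin u1 u2] at a3
  have e : (U * Real.cos ((p - q) / 4) - Real.cos (Real.arcsin U) * Real.sin ((p - q) / 4)) *
      (U * Real.cos ((p - q) / 4) + Real.cos (Real.arcsin U) * Real.sin ((p - q) / 4))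
      = U ^ 2 - Real.sin ((p - q) / 4) ^ 2 := by
    linear_combination U ^ 2 * a2 - Real.sin ((p - q) / 4) ^ 2 * a3
  rw [e]
  refine le_trans ?_ (neg_le_abs _)
  set D := Real.cos ((p - q) / 4)
  set c := Real.cos ((p + q) / 4)
  set E := Real.sin ((p - q) / 4)
  have hD2 : 0 < D ^ 2 := by positivity
  have hD1 : D ^ 2 ≤ 1 := by nlinarith [sq_nonneg E]
  have : E ^ 2 * (D ^ 2 - c ^ 2) * D ^ 2 ≤ -(U ^ 2 - E ^ 2) * D ^ 2 := by
    have h1 : -(U ^ 2 - E ^ 2) * D ^ 2 = E ^ 2 * (D ^ 2 - c ^ 2) := by linear_combination -hU2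
    rw [h1]
    have h2 : 0 ≤ E ^ 2 * (D ^ 2 - c ^ 2) := mul_nonneg (sq_nonneg E) (by linarith)
    nlinarith
  exact le_of_mul_le_mul_right this hD2

lemma Fplus_bounds {p q : ℝ} (hp : p ∈ Ioo 0 (2 * π)) (hq : q ∈ Ioo 0 (2 * π)) :
    0 < Fplus p q ∧ Real.sqrt (Fplus p q) ≤ 3 := by
  have h1 := sin_half_pos hp
  have h2 := sin_half_pos hq
  have h3 := Real.sin_le_one (p / 2)
  have h4 := Real.sin_le_one (q / 2)
  constructor
  · unfold Fplus
    positivity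
  · rw [Real.sqrt_le_left (by norm_num)]
    unfold Fplus
    have h5 := abs_le.1 (Real.abs_cos_le_one (p / 2))
    have h6 := abs_le.1 (Real.abs_cos_le_one (q / 2))
    have h7 : Real.sin (p / 2) * Real.sin (q / 2) ≤ 1 := by nlinarith
    have h8 : (Real.cos (p / 2) + Real.cos (q / 2)) ^ 2 ≤ 2 ^ 2 := by
      apply sq_le_sq' <;> linarith [h5.1, h5.2, h6.1, h6.2]
    nlinarith

lemma sin_integral (p : ℝ) :
    ∫ q in (0 : ℝ)..(2 * π), Real.sin ((p - q) / 4) ^ 2 * Real.sin (q / 2) ^ 2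
      = (2 * π - 16 / 3 * Real.sin (p / 2)) / 4 := by
  have hder : ∀ q ∈ uIcc (0 : ℝ) (2 * π), HasDerivAt (fun q : ℝ =>
      (q - Real.sin q - 2 * Real.sin ((q - p) / 2)
        + (1 / 3) * Real.sin ((3 * q - p) / 2) + Real.sin ((q + p) / 2)) / 4)
      (Real.sin ((p - q) / 4) ^ 2 * Real.sin (q / 2) ^ 2) q := by
    intro q _
    have h0 := hasDerivAt_id q
    have h1 := (Real.hasDerivAt_sin ((q - p) / 2)).comp q ((h0.sub_const p).div_const 2)
    have h2 := (Real.hasDerivAt_sin ((3 * q - p) / 2)).comp q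
      (((h0.const_mul 3).sub_const p).div_const 2)
    have h3 := (Real.hasDerivAt_sin ((q + p) / 2)).comp q ((h0.add_const p).div_const 2)
    have h := ((((h0.sub (Real.hasDerivAt_sin q)).sub (h1.const_mul 2)).add
      (h2.const_mul (1 / 3))).add h3).div_const 4
    have h' : HasDerivAt (fun q : ℝ =>
      (q - Real.sin q - 2 * Real.sin ((q - p) / 2)
        + (1 / 3) * Real.sin ((3 * q - p) / 2) + Real.sin ((q + p) / 2)) / 4) _ q := h
    refine h'.congr_deriv ?_
    have e1 : Real.sin ((p - q) / 4) ^ 2 = (1 - Real.cos ((q - p) / 2)) / 2 := by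
      rw [Real.sin_sq_eq_half_sub, show 2 * ((p - q) / 4) = -((q - p) / 2) by ring, Real.cos_neg]
      ring
    have e2 : Real.sin (q / 2) ^ 2 = (1 - Real.cos q) / 2 := by
      rw [Real.sin_sq_eq_half_sub, show 2 * (q / 2) = q by ring]
      ring
    have e3 : Real.cos ((3 * q - p) / 2) = Real.cos ((q - p) / 2) * Real.cos q
        - Real.sin ((q - p) / 2) * Real.sin q := by
      rw [← Real.cos_add]; congr 1; ring
    have e4 : Real.cos ((q + p) / 2) = Real.cos ((q - p) / 2) * Real.cos q
        + Real.sin ((q - p) / 2) * Real.sin q := by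
      rw [← Real.cos_neg, show -((q + p) / 2) = (q - p) / 2 - q by ring, Real.cos_sub]
    rw [e1, e2, e3, e4]
    ring
  rw [intervalIntegral.integral_eq_sub_of_hasDerivAt hder
    (Continuous.intervalIntegrable (by fun_prop) _ _)]
  have e1 : Real.sin ((2 * π - p) / 2) = Real.sin (p / 2) := by
    rw [show (2 * π - p) / 2 = π - p / 2 by ring, Real.sin_pi_sub]
  have e2 : Real.sin ((3 * (2 * π) - p) / 2) = Real.sin (p / 2) := by
    rw [show (3 * (2 * π) - p) / 2 = (π - p / 2) + 2 * π by ring, Real.sin_add_two_pi,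
      Real.sin_pi_sub]
  have e3 : Real.sin ((2 * π + p) / 2) = - Real.sin (p / 2) := by
    rw [show (2 * π + p) / 2 = p / 2 + π by ring, Real.sin_add_pi]
  have e4 : Real.sin ((0 - p) / 2) = - Real.sin (p / 2) := by
    rw [show (0 - p) / 2 = -(p / 2) by ring, Real.sin_neg]
  have e5 : Real.sin ((3 * 0 - p) / 2) = - Real.sin (p / 2) := by
    rw [show (3 * 0 - p) / 2 = -(p / 2) by ring, Real.sin_neg]
  rw [e1, e2, e3, e4, e5, Real.sin_two_pi, Real.sin_zero, zero_add]
  ring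

lemma afreq_weight {β γ : ℝ} (hβ : 0 < β) (hγ : 0 < γ) :
    ∃ C : ℝ, 0 < C ∧ ∀ p ∈ Ioo 0 (2 * π),
      0 ≤ afreq β γ p ^ (-(1:ℝ)/2) ∧ afreq β γ p ^ (-(1:ℝ)/2) * ω p ≤ C := by
  set m : ℝ := (1 / (β + γ)) * (1 / (β + γ)) * (1 / (β + γ)) / 3 with hm
  have hmpos : 0 < m := by positivity
  set c : ℝ := γ * (m * (1 / 5)) with hcdef
  have hc : 0 < c := by positivity
  refine ⟨c ^ (-(1:ℝ)/2), by positivity, fun p hp => ?_⟩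
  have hωp := ω_pos hp
  set G : ℝ → ℝ := fun q => ω (resH p q) * ω q * ω (p + resH p q - q) *
        (fRJ β γ (resH p q) * fRJ β γ q * fRJ β γ (p + resH p q - q)) / Real.sqrt (Fplus p q)
    with hG
  have hdef : afreq β γ p = ω p / fRJ β γ p * ∫ q in (0:ℝ)..(2 * π), G q := rfl
  by_cases hint : IntervalIntegrable G volume 0 (2 * π)
  · have hlow : ∀ q ∈ Ioo 0 (2 * π),
        m * ω p * (Real.sin ((p - q) / 4) ^ 2 * Real.sin (q / 2) ^ 2) ≤ G q := by
      intro q hq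
      obtain ⟨hF, hF3⟩ := Fplus_bounds hp hq
      have h13 := omega13 hp hq
      have hωq := ω_pos hq
      have hsq : Real.sin (q / 2) ^ 2 = ω q * ω q := by
        unfold ω; rw [← abs_mul, ← sq, abs_of_nonneg (sq_nonneg _)]
      have f1 := le_fRJ hβ hγ (resH p q)
      have f2 := le_fRJ hβ hγ q
      have f3 := le_fRJ hβ hγ (p + resH p q - q)
      have hb : 0 < 1 / (β + γ) := by positivity
      have hff : (1 / (β + γ)) * (1 / (β + γ)) * (1 / (β + γ)) ≤
          fRJ β γ (resH p q) * fRJ β γ q * fRJ β γ (p + resH p q - q) := by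
        have i1 := fRJ_pos hβ hγ (resH p q)
        have i2 := fRJ_pos hβ hγ q
        have i3 := fRJ_pos hβ hγ (p + resH p q - q)
        gcongr
      have g1 := ω_nonneg (resH p q)
      have g2 := ω_nonneg (p + resH p q - q)
      have hsF : 0 < Real.sqrt (Fplus p q) := Real.sqrt_pos.2 hF
      rw [hsq, hG]
      dsimp only
      calc m * ω p * (Real.sin ((p - q) / 4) ^ 2 * (ω q * ω q))
          = (Real.sin ((p - q) / 4) ^ 2 * (ω p * ω q)) * ω q *
            ((1 / (β + γ)) * (1 / (β + γ)) * (1 / (β + γ))) / 3 := by rw [hm]; ring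
        _ ≤ (ω (resH p q) * ω (p + resH p q - q)) * ω q *
            (fRJ β γ (resH p q) * fRJ β γ q * fRJ β γ (p + resH p q - q)) / 3 := by gcongr
        _ ≤ (ω (resH p q) * ω (p + resH p q - q)) * ω q *
            (fRJ β γ (resH p q) * fRJ β γ q * fRJ β γ (p + resH p q - q))
              / Real.sqrt (Fplus p q) := by
            apply div_le_div_of_nonneg_left _ hsF hF3
            have := fRJ_pos hβ hγ (resH p q)
            have := fRJ_pos hβ hγ q
            have := fRJ_pos hβ hγ (p + resH p q - q)
            positivity
        _ = _ := by ring
    have hI : m * ω p * ((2 * π - 16 / 3 * Real.sin (p / 2)) / 4) ≤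
        ∫ q in (0:ℝ)..(2 * π), G q := by
      rw [← sin_integral, ← intervalIntegral.integral_const_mul]
      apply intervalIntegral.integral_mono_on_of_le_Ioo (by positivity) _ hint hlow
      exact Continuous.intervalIntegrable (by fun_prop) _ _
    have hfin : c * ω p ^ 2 ≤ afreq β γ p := by
      rw [hdef]
      have hf : γ ≤ 1 / fRJ β γ p := by
        unfold fRJ
        rw [one_div_one_div]
        nlinarith
      have h15 : (1 / 5 : ℝ) ≤ (2 * π - 16 / 3 * Real.sin (p / 2)) / 4 := by
        have := Real.sin_le_one (p / 2)
        have := Real.pi_gt_d2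
        linarith
      calc c * ω p ^ 2 = ω p * γ * (m * ω p * (1 / 5)) := by rw [hcdef]; ring
        _ ≤ ω p * (1 / fRJ β γ p) * (m * ω p * ((2 * π - 16 / 3 * Real.sin (p / 2)) / 4)) := by
          have := fRJ_pos hβ hγ p
          gcongr
        _ ≤ ω p * (1 / fRJ β γ p) * ∫ q in (0:ℝ)..(2 * π), G q := by
          have := fRJ_pos hβ hγ p
          gcongr
        _ = _ := by ring
    have hpos : 0 < c * ω p ^ 2 := by positivity
    refine ⟨Real.rpow_nonneg (hpos.le.trans hfin) _, ?_⟩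
    have h1 : afreq β γ p ^ (-(1:ℝ)/2) ≤ (c * ω p ^ 2) ^ (-(1:ℝ)/2) :=
      Real.rpow_le_rpow_of_nonpos hpos hfin (by norm_num)
    have h2 : (c * ω p ^ 2) ^ (-(1:ℝ)/2) * ω p = c ^ (-(1:ℝ)/2) := by
      rw [Real.mul_rpow hc.le (by positivity), ← Real.rpow_natCast (ω p) 2,
        ← Real.rpow_mul hωp.le, mul_assoc]
      norm_num
      rw [Real.rpow_neg_one, inv_mul_cancel₀ hωp.ne', mul_one]
    calc _ ≤ (c * ω p ^ 2) ^ (-(1:ℝ)/2) * ω p := by gcongr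
      _ = _ := h2
  · have h0 : afreq β γ p = 0 := by
      rw [hdef, intervalIntegral.integral_undef hint, mul_zero]
    rw [h0, Real.zero_rpow (by norm_num), zero_mul]
    exact ⟨le_rfl, by positivity⟩

/-! ### Part 4: the conclusion -/

lemma measurable_ω : Measurable ω := by unfold ω; fun_prop

lemma measurable_fRJ (β γ : ℝ) : Measurable (fRJ β γ) := by
  have := measurable_ω
  unfold fRJ; fun_prop

lemma measurable_p2aux : Measurable (fun z : ℝ × ℝ => p2aux z.1 z.2) := by
  have h1 := measurable_arcsin'.comp measurable_TT
  have : (fun z : ℝ × ℝ => p2aux z.1 z.2) =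
      fun z => (z.1 + z.2) / 2 + 2 * (Real.arcsin ∘ fun z : ℝ × ℝ => TT z.1 z.2) z := rfl
  rw [this]
  fun_prop

lemma measurable_resH : Measurable (fun z : ℝ × ℝ => resH z.1 z.2) := by
  have h1 := measurable_tan'
  have h2 := measurable_arcsin'
  unfold resH
  fun_prop

lemma measurable_K1 (β γ : ℝ) : Measurable (fun z : ℝ × ℝ => K1 β γ z.1 z.2) := by
  have h1 := measurable_p2aux
  have h2 := measurable_ω
  have h3 := measurable_fRJ β γ
  have h4 : Measurable (fun z : ℝ × ℝ => Fminus z.1 z.2) := by unfold Fminus; fun_prop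
  unfold K1
  refine Measurable.ite (measurableSet_lt measurable_const h4) ?_ measurable_const
  fun_prop

lemma measurable_afreq (β γ : ℝ) : Measurable (afreq β γ) := by
  have h1 := measurable_resH
  have h2 := measurable_ω
  have h3 := measurable_fRJ β γ
  have h4 : Measurable (fun z : ℝ × ℝ => Fplus z.1 z.2) := by unfold Fplus; fun_prop
  unfold afreq
  refine Measurable.mul (by fun_prop) ?_
  have hpi : (0 : ℝ) ≤ 2 * π := by positivity
  simp only [intervalIntegral.integral_of_le hpi]
  refine (StronglyMeasurable.integral_prod_right' (f := fun z : ℝ × ℝ =>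
    ω (resH z.1 z.2) * ω z.2 * ω (z.1 + resH z.1 z.2 - z.2) *
        (fRJ β γ (resH z.1 z.2) * fRJ β γ z.2 * fRJ β γ (z.1 + resH z.1 z.2 - z.2))
          / Real.sqrt (Fplus z.1 z.2)) (Measurable.stronglyMeasurable ?_)).measurable
  fun_prop

/-- the weighted kernel, cut off to the square -/
def kk (β γ : ℝ) : ℝ × ℝ → ℝ :=
  (Ioo 0 (2 * π) ×ˢ Ioo 0 (2 * π)).indicator fun z =>
    afreq β γ z.1 ^ (-(1:ℝ)/2) * K1 β γ z.1 z.2 * afreq β γ z.2 ^ (-(1:ℝ)/2)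

lemma measurable_kk (β γ : ℝ) : Measurable (kk β γ) := by
  have h1 := measurable_K1 β γ
  have h2 := measurable_afreq β γ
  refine Measurable.indicator ?_ (measurableSet_Ioo.prod measurableSet_Ioo)
  fun_prop

lemma kk_bound {β γ : ℝ} (hβ : 0 < β) (hγ : 0 < γ) : ∃ C : ℝ, 0 < C ∧ ∀ p q,
    kk β γ (p, q) ≠ 0 → p ∈ Ioo 0 (2 * π) ∧ q ∈ Ioo 0 (2 * π) ∧ Real.cos ((p + q) / 4) ≠ 0 ∧
      |TT p q| < 1 ∧
      |kk β γ (p, q)| ≤ C * (Real.cos ((p - q) / 4) / Real.sqrt (1 - TT p q ^ 2)) := by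
  obtain ⟨C, hC, hw⟩ := afreq_weight hβ hγ
  refine ⟨C * C * (1 / γ * (1 / γ)), by positivity, fun p q h => ?_⟩
  have hmem : (p, q) ∈ Ioo 0 (2 * π) ×ˢ Ioo 0 (2 * π) := by
    by_contra hn
    exact h (indicator_of_notMem hn _)
  obtain ⟨hp, hq⟩ := hmem
  simp only at hp hq
  have hkk : kk β γ (p, q) = afreq β γ p ^ (-(1:ℝ)/2) * K1 β γ p q * afreq β γ q ^ (-(1:ℝ)/2) :=
    indicator_of_mem (s := Ioo 0 (2 * π) ×ˢ Ioo 0 (2 * π)) ⟨hp, hq⟩ _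
  have hF : 0 < Fminus p q := by
    by_contra hn
    apply h
    rw [hkk, K1, if_neg hn]; simp
  refine ⟨hp, hq, cos_ne_of_Fminus hF, (sq_lt_one_iff_abs_lt_one _).1 (TT_sq_lt hF), ?_⟩
  have hb := omega23_bound hp hq hF
  obtain ⟨wp, wp2⟩ := hw p hp
  obtain ⟨wq, wq2⟩ := hw q hq
  have f1 := fRJ_le hβ hγ (p2aux p q)
  have f2 := fRJ_le hβ hγ (p + q - p2aux p q)
  have f3 := (fRJ_pos hβ hγ (p2aux p q)).le
  have f4 := (fRJ_pos hβ hγ (p + q - p2aux p q)).le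
  have o1 := ω_nonneg p
  have o2 := ω_nonneg q
  have o3 := ω_nonneg (p2aux p q)
  have o4 := ω_nonneg (p + q - p2aux p q)
  rw [hkk, K1, if_pos hF]
  have e : afreq β γ p ^ (-(1:ℝ)/2) * (ω p * ω q * ω (p2aux p q) * ω (p + q - p2aux p q) *
      (fRJ β γ (p2aux p q) * fRJ β γ (p + q - p2aux p q)) / Real.sqrt (Fminus p q))
        * afreq β γ q ^ (-(1:ℝ)/2)
      = (afreq β γ p ^ (-(1:ℝ)/2) * ω p) * (afreq β γ q ^ (-(1:ℝ)/2) * ω q)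
        * (fRJ β γ (p2aux p q) * fRJ β γ (p + q - p2aux p q))
        * (ω (p2aux p q) * ω (p + q - p2aux p q) / Real.sqrt (Fminus p q)) := by ring
  rw [e, abs_of_nonneg (by positivity)]
  gcongr

lemma kk_comp {β γ : ℝ} (hβ : 0 < β) (hγ : 0 < γ) : KComp μ2π (kk β γ) := by
  haveI : IsFiniteMeasure μ2π := by unfold μ2π; infer_instance
  obtain ⟨C, hC, hb⟩ := kk_bound hβ hγ
  refine KComp_of_schur (measurable_kk β γ) fun ε hε => ?_
  have hε' : (0 : ℝ) < ε := hε
  set δ : ℝ := min 1 (ε / (16 * C)) with hδdef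
  have hδ : 0 < δ := by positivity
  have hδ1 : δ ≤ 1 := min_le_left _ _
  have hδ2 : C * (16 * δ) ≤ ε := by
    have : δ ≤ ε / (16 * C) := min_le_right _ _
    rw [le_div_iff₀ (by positivity)] at this
    linarith
  have hsδ : 0 < Real.sin δ := Real.sin_pos_of_pos_of_lt_pi hδ (by linarith [Real.pi_gt_three])
  have hmarc := measurable_arcsin'.comp measurable_TT
  set s : Set (ℝ × ℝ) := {z | |Real.arcsin (TT z.1 z.2)| ≤ π / 2 - δ} with hs
  have hsm : MeasurableSet s := measurableSet_le hmarc.abs measurable_const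
  -- generic one-sided estimate
  have gen : ∀ (f : ℝ → ℝ) (p : ℝ), (∀ q, f q ≠ 0 → p ∈ Ioo 0 (2 * π) ∧ q ∈ Eset δ p ∧
      |f q| ≤ C * (Real.cos ((p - q) / 4) / Real.sqrt (1 - TT p q ^ 2))) →
      ∫⁻ q, ‖f q‖ₑ ∂μ2π ≤ ε := by
    intro f p hf
    by_cases hp : p ∈ Ioo 0 (2 * π)
    · calc ∫⁻ q, ‖f q‖ₑ ∂μ2π ≤ ∫⁻ q, ‖f q‖ₑ := lintegral_mono' Measure.restrict_le_self le_rfl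
        _ ≤ ∫⁻ q, (Eset δ p).indicator (fun q => ENNReal.ofReal C *
            ENNReal.ofReal (Real.cos ((p - q) / 4) / Real.sqrt (1 - TT p q ^ 2))) q := by
            refine lintegral_mono fun q => ?_
            by_cases hq : f q = 0
            · simp [hq]
            · obtain ⟨-, h2, h3⟩ := hf q hq
              rw [indicator_of_mem h2, ← ENNReal.ofReal_mul hC.le, Real.enorm_eq_ofReal_abs]
              exact ENNReal.ofReal_le_ofReal h3
        _ = ENNReal.ofReal C * ∫⁻ q in Eset δ p,
            ENNReal.ofReal (Real.cos ((p - q) / 4) / Real.sqrt (1 - TT p q ^ 2)) := by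
            rw [lintegral_indicator (measurableSet_Eset δ p),
              lintegral_const_mul' _ _ ENNReal.ofReal_ne_top]
        _ ≤ ENNReal.ofReal C * ENNReal.ofReal (16 * δ) := by
            gcongr; exact row_bound hδ hp
        _ = ENNReal.ofReal (C * (16 * δ)) := (ENNReal.ofReal_mul hC.le).symm
        _ ≤ ENNReal.ofReal ε := ENNReal.ofReal_le_ofReal hδ2
        _ = ε := ENNReal.ofReal_coe_nnreal
    · have : f = fun _ => 0 := by
        ext q; by_contra hq; exact hp (hf q hq).1
      simp [this]
  have hind : ∀ p q, sᶜ.indicator (kk β γ) (p, q) ≠ 0 →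
      p ∈ Ioo 0 (2 * π) ∧ q ∈ Ioo 0 (2 * π) ∧ Real.cos ((p + q) / 4) ≠ 0 ∧ |TT p q| < 1 ∧
      π / 2 - δ < |Real.arcsin (TT p q)| ∧ |sᶜ.indicator (kk β γ) (p, q)|
        ≤ C * (Real.cos ((p - q) / 4) / Real.sqrt (1 - TT p q ^ 2)) := by
    intro p q h
    have hmem : (p, q) ∈ sᶜ := by
      by_contra hn; exact h (indicator_of_notMem hn _)
    rw [indicator_of_mem hmem] at h ⊢
    obtain ⟨a1, a2, a3, a4, a5⟩ := hb p q h
    exact ⟨a1, a2, a3, a4, not_le.1 hmem, a5⟩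
  refine ⟨s, hsm, ⟨C * (1 / Real.sin δ), ?_⟩, fun p => ?_, fun q => ?_⟩
  · rintro ⟨p, q⟩ hz
    by_cases h0 : kk β γ (p, q) = 0
    · rw [h0, abs_zero]; positivity
    · obtain ⟨hp, hq, -, hT, hk⟩ := hb p q h0
      refine hk.trans ?_
      have hz' : |Real.arcsin (TT p q)| ≤ π / 2 - δ := hz
      have hcos : Real.sin δ ≤ Real.sqrt (1 - TT p q ^ 2) := by
        rw [← Real.cos_arcsin, ← Real.cos_abs, ← Real.cos_pi_div_two_sub]
        apply Real.cos_le_cos_of_nonneg_of_le_pi (abs_nonneg _) _ hz'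
        linarith [Real.pi_pos]
      have := Real.cos_le_one ((p - q) / 4)
      gcongr
  · refine gen (fun q => sᶜ.indicator (kk β γ) (p, q)) p fun q hq => ?_
    obtain ⟨a1, a2, a3, a4, a5, a6⟩ := hind p q hq
    exact ⟨a1, ⟨a2, a3, a4, a5⟩, a6⟩
  · refine gen (fun p => sᶜ.indicator (kk β γ) (p, q)) q fun p hp => ?_
    obtain ⟨a1, a2, a3, a4, a5, a6⟩ := hind p q hp
    rw [TT_symm p q] at a4 a5 a6
    rw [add_comm] at a3
    rw [cosd_symm] at a6
    exact ⟨a2, ⟨a1, a3, a4, a5⟩, a6⟩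

/-- **Compactness of the weighted `K₁` operator:** for `β, γ > 0`, the integral operator
on `L²(0,2π)` with kernel `a(p)^{−1/2} K₁(p,q) a(q)^{−1/2}` is a well-defined bounded
linear operator which is compact. -/
theorem stmt10 (β γ : ℝ) (hβ : 0 < β) (hγ : 0 < γ) :
    ∃ T : Lp ℝ 2 μ2π →L[ℝ] Lp ℝ 2 μ2π,
      (∀ g : Lp ℝ 2 μ2π,
        (T g : ℝ → ℝ) =ᵐ[μ2π] fun p => ∫ q in Set.Ioo (0:ℝ) (2 * π),
          afreq β γ p ^ (-(1:ℝ)/2) * K1 β γ p q * afreq β γ q ^ (-(1:ℝ)/2) * g q) ∧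
      IsCompactOperator T := by

  obtain ⟨-, T, hT, hc⟩ := kk_comp hβ hγ
  refine ⟨T, fun g => ?_, hc⟩
  have hmem : ∀ᵐ p ∂μ2π, p ∈ Ioo 0 (2 * π) := ae_restrict_mem measurableSet_Ioo
  filter_upwards [hT g, hmem] with p h1 hp
  rw [h1]
  refine setIntegral_congr_fun measurableSet_Ioo fun q hq => ?_
  have hkk : kk β γ (p, q) = afreq β γ p ^ (-(1:ℝ)/2) * K1 β γ p q * afreq β γ q ^ (-(1:ℝ)/2) :=
    indicator_of_mem (s := Ioo 0 (2 * π) ×ˢ Ioo 0 (2 * π)) ⟨hp, hq⟩ _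
  simp only [hkk]
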